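/- Elliptic differential inequality and L²-bound for the maximum principle (Proposition 7.2): Let H:ℝ^{2n}→ℝ be smooth and let u(s)=(v(s,·),η(s)) be a smooth solution of the Floer equations for (H,J₀): ∂_sv=−J₀(∂_tv−ηX^H(v)), ∂_sη=−∫₀¹H(v(s,t))dt, with v 1-periodic in t. Define f(s,t):=η(s)²·f₁(v(s,t))+η′(s)·f₂(v(s,t)). Then: (a) Δ(F∘v)=(∂_{ss}+∂_{tt})(F∘v) ≥ f everywhere on ℝ×S¹, where F(x)=¼‖x‖². (b) Assume in addition: ‖Hess_xH‖≤M, ‖∇H(x)‖≤h₁+M‖x‖ and ‖D³H_x‖·‖x‖≤L for all x; ∫_ℝ(‖∂_sv(s)‖²_{L²(S¹)}+|η′(s)|²)ds ≤ 𝔢; ‖v(s)‖_{L²}≤𝐯 and |η(s)|≤𝔶 for all s∈ℝ; and Ω⊆ℝ×S¹ is a connected open set such that, with s₀:=inf{s : (s,t)∈Ω} and s₁:=sup{s : (s,t)∈Ω}, one has ‖∇𝒜^H(u(s))‖>ε for all s∈(s₀,s₁), where ε>0. Then ‖f‖_{L²(Ω)} ≤ C(𝔢,𝔶,𝐯,ε)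 < ∞, where C depends only on M,h₁,L and continuously on 𝔢,𝔶,𝐯,ε. -/

import Mathlib

open MeasureTheory intervalIntegral Set
open scoped RealInnerProductSpace Topology

noncomputable section

/-- Phase space `ℝ^{2n}`, realized as `ℂ^n` with its real inner product. -/
abbrev E (n : ℕ) := EuclideanSpace ℂ (Fin n)

/-- The standard linear complex structure `J₀` (multiplication by `i`). -/
def J0 {n : ℕ} (x : E n) : E n := Complex.I • x

/-- The standard symplectic form `ω₀(u,w) = ⟨J₀u, w⟩`. -/
def om {n : ℕ} (u w : E n) : ℝ := @inner ℝ _ _ (J0 u) w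

/-- The Hamiltonian vector field `X^H = J₀ ∇H`. -/
def XH {n : ℕ} (H : E n → ℝ) (x : E n) : E n := J0 (gradient H x)

/-- A loop: a smooth 1-periodic map `ℝ → ℝ^{2n}`. -/
def IsLoop {n : ℕ} (v : ℝ → E n) : Prop := ContDiff ℝ (⊤ : ℕ∞) v ∧ ∀ t, v (t + 1) = v t

/-- The `L²` norm on loops. -/
def L2 {n : ℕ} (v : ℝ → E n) : ℝ := Real.sqrt (∫ t in (0:ℝ)..1, ‖v t‖ ^ 2)

/-- The Rabinowitz action functional. -/
def RabAction {n : ℕ} (H : E n → ℝ) (v : ℝ → E n) (η : ℝ) : ℝ :=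
  (∫ t in (0:ℝ)..1, (1 / 2) * om (v t) (deriv v t)) - η * ∫ t in (0:ℝ)..1, H (v t)

/-- The norm `‖∇𝒜^H(v,η)‖ = ‖∂_t v − η X^H(v)‖_{L²} + |∫₀¹ H(v)|` of the `L²` gradient. -/
def gradNorm {n : ℕ} (H : E n → ℝ) (v : ℝ → E n) (η : ℝ) : ℝ :=
  L2 (fun t => deriv v t - η • XH H (v t)) + |∫ t in (0:ℝ)..1, H (v t)|

/-- A Liouville vector field on a set `U`. -/
def IsLiouvilleOn {n : ℕ} (X : E n → E n) (U : Set (E n)) : Prop :=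
  ∀ x ∈ U, ∀ u w : E n, om (fderiv ℝ X x u) w + om u (fderiv ℝ X x w) = om u w

/-- Condition (H1). -/
def SatH1 {n : ℕ} (H : E n → ℝ) (c₁ c₂ c₃ : ℝ) : Prop :=
  ∃ X : E n → E n, ContDiff ℝ (⊤ : ℕ∞) X ∧ IsLiouvilleOn X Set.univ ∧
    (∀ x, ‖X x‖ ≤ c₁ * (‖x‖ + 1)) ∧ ∀ x, fderiv ℝ H x (X x) ≥ c₂ * ‖x‖ ^ 2 - c₃

/-- Condition (H2). -/
def SatH2 {n : ℕ} (H : E n → ℝ) (L : ℝ) : Prop :=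
  ∀ x, ‖iteratedFDeriv ℝ 3 H x‖ * ‖x‖ ≤ L

/-- Condition (H3). -/
def SatH3 {n : ℕ} (H : E n → ℝ) (c₄ c₅ ν : ℝ) : Prop :=
  ∃ X : E n → E n, IsLiouvilleOn X (H ⁻¹' Ioo (-ν) ν) ∧
    (∀ x ∈ H ⁻¹' Ioo (-ν) ν, ‖X x‖ ≤ c₄ * (‖x‖ ^ 2 + 1)) ∧
    ∀ x ∈ H ⁻¹' Ioo (-ν) ν, fderiv ℝ H x (X x) ≥ c₅

/-- Admissible Hamiltonians. -/
def Admissible {n : ℕ} (H : E n → ℝ) : Prop :=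
  ContDiff ℝ (⊤ : ℕ∞) H ∧ ∃ c₁ c₂ c₃ L c₄ c₅ ν : ℝ,
    0 < c₁ ∧ 0 < c₂ ∧ 0 ≤ c₃ ∧ 0 ≤ L ∧ 0 < c₄ ∧ 0 < c₅ ∧ 0 < ν ∧
    SatH1 H c₁ c₂ c₃ ∧ SatH2 H L ∧ SatH3 H c₄ c₅ ν

/-- Uniform bound on the Hessian. -/
def HessBound {n : ℕ} (H : E n → ℝ) (M : ℝ) : Prop :=
  ∀ x, ‖iteratedFDeriv ℝ 2 H x‖ ≤ M

/-- Linear growth of the gradient. -/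
def GradBound {n : ℕ} (H : E n → ℝ) (M h₁ : ℝ) : Prop :=
  ∀ x, ‖gradient H x‖ ≤ h₁ + M * ‖x‖

/-- A Floer trajectory for a fixed Hamiltonian `H` and the standard complex structure `J₀`. -/
def FloerAut {n : ℕ} (H : E n → ℝ) (v : ℝ → ℝ → E n) (η : ℝ → ℝ) : Prop :=
  ContDiff ℝ (⊤ : ℕ∞) (fun p : ℝ × ℝ => v p.1 p.2) ∧ ContDiff ℝ (⊤ : ℕ∞) η ∧ (∀ s, IsLoop (v s)) ∧
  (∀ s t, deriv (fun σ => v σ t) s = -(J0 (deriv (v s) t - η s • XH H (v s t)))) ∧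
  ∀ s, deriv η s = -∫ t in (0:ℝ)..1, H (v s t)

/-- `dF(X^H)` for the radial function `F(x) = ¼‖x‖²` (so `∇F(x) = x/2`). -/
def afun {n : ℕ} (H : E n → ℝ) (x : E n) : ℝ :=
  @inner ℝ _ _ ((1 / 2 : ℝ) • x) (J0 (gradient H x))

/-- `f₂ = d^ℂF(X^H) = −⟨∇F, ∇H⟩` for the radial function `F(x) = ¼‖x‖²`. -/
def f2fun {n : ℕ} (H : E n → ℝ) (x : E n) : ℝ :=
  -(@inner ℝ _ _ ((1 / 2 : ℝ) • x) (gradient H x))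

/-- `f₁ = ⟨∇a, J₀∇H⟩ − ‖∇H‖² − ‖∇f₂‖² − ‖∇a‖²` where `a = dF(X^H)`. -/
def f1fun {n : ℕ} (H : E n → ℝ) (x : E n) : ℝ :=
  @inner ℝ _ _ (gradient (afun H) x) (J0 (gradient H x))
    - ‖gradient H x‖ ^ 2 - ‖gradient (f2fun H) x‖ ^ 2 - ‖gradient (afun H) x‖ ^ 2

/-- The Laplacian `Δ(F∘v)(s,t) = (∂_{ss} + ∂_{tt})(F∘v)(s,t)` of the radial function
`F(x) = ¼‖x‖²` composed with `v`. -/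
def lapF {n : ℕ} (v : ℝ → ℝ → E n) (s t : ℝ) : ℝ :=
  deriv (fun σ => deriv (fun σ' => (1 / 4) * ‖v σ' t‖ ^ 2) σ) s +
  deriv (fun τ => deriv (fun τ' => (1 / 4) * ‖v s τ'‖ ^ 2) τ) t

/-!
For (a), completing squares gives, with `w = ∂_s v`, the identity
`Δ(F ∘ v) - f = ¼‖w‖² + ‖½w + η∇H‖² + ‖½w + η∇f₂‖² + ‖½J₀w + η∇a‖²`.

For (b), growth of `H` gives `|f| ≤ c (1 + ‖v‖²)`, where `c` involves a bound for `|η'|`.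
Everything is controlled by the energy density `e(s) = ‖∂_s v(s)‖²_{L²} + |η'(s)|²` through the
estimate `|φ(x) - ⨍ φ| ≤ ∫ |φ'|`: applied to `η'²` on `[s, s + 1]` it bounds `|η'|`, and applied to
`‖v(s, ·)‖²` on `[0, 1]` it bounds `sup_t ‖v(s, t)‖²` by a constant plus `2 e(s)`. Since
`‖∇𝒜^H(u(s))‖ = ‖∂_s v(s)‖_{L²} + |η'(s)|`, the lower bound `ε` on the gradient and Chebyshev's
inequality give `s₁ - s₀ ≤ 2𝔢 / ε²`.
-/

open Function

section PartialDerivatives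

variable {F : Type*} [NormedAddCommGroup F] [NormedSpace ℝ F] {v : ℝ → ℝ → F} {a b : ℝ}

/-- The partial derivative `∂_s v` of a map of two real variables, kept in curried form. -/
def partialFst (v : ℝ → ℝ → F) (s t : ℝ) : F := deriv (fun σ => v σ t) s

/-- The partial derivative `∂_t v` of a map of two real variables, kept in curried form. -/
def partialSnd (v : ℝ → ℝ → F) (s t : ℝ) : F := deriv (v s) t

lemma hasDerivAt_fst_of_differentiable (hv : Differentiable ℝ (uncurry v)) (s t : ℝ) :
    HasDerivAt (fun σ => v σ t) (fderiv ℝ (uncurry v) (s, t) (1, 0)) s :=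
  have hslice : HasDerivAt (fun σ : ℝ => (σ, t)) ((1 : ℝ), (0 : ℝ)) s :=
    (hasDerivAt_id s).prodMk (hasDerivAt_const s t)
  HasFDerivAt.comp_hasDerivAt (l := uncurry v) (f := fun σ => (σ, t)) s (hv (s, t)).hasFDerivAt
    hslice

lemma hasDerivAt_snd_of_differentiable (hv : Differentiable ℝ (uncurry v)) (s t : ℝ) :
    HasDerivAt (v s) (fderiv ℝ (uncurry v) (s, t) (0, 1)) t :=
  have hslice : HasDerivAt (fun τ : ℝ => (s, τ)) ((0 : ℝ), (1 : ℝ)) t :=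
    (hasDerivAt_const t s).prodMk (hasDerivAt_id t)
  (hv (s, t)).hasFDerivAt.comp_hasDerivAt t hslice

lemma hasDerivAt_partialFst (hv : Differentiable ℝ (uncurry v)) (s t : ℝ) :
    HasDerivAt (fun σ => v σ t) (partialFst v s t) s :=
  (hasDerivAt_fst_of_differentiable hv s t).differentiableAt.hasDerivAt

lemma hasDerivAt_partialSnd (hv : Differentiable ℝ (uncurry v)) (s t : ℝ) :
    HasDerivAt (v s) (partialSnd v s t) t :=
  (hasDerivAt_snd_of_differentiable hv s t).differentiableAt.hasDerivAt

lemma uncurry_partialFst (hv : Differentiable ℝ (uncurry v)) :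
    uncurry (partialFst v) = fun p => fderiv ℝ (uncurry v) p (1, 0) :=
  funext fun p => (hasDerivAt_fst_of_differentiable hv p.1 p.2).deriv

lemma uncurry_partialSnd (hv : Differentiable ℝ (uncurry v)) :
    uncurry (partialSnd v) = fun p => fderiv ℝ (uncurry v) p (0, 1) :=
  funext fun p => (hasDerivAt_snd_of_differentiable hv p.1 p.2).deriv

lemma contDiff_partialFst {m : WithTop ℕ∞} (hv : ContDiff ℝ (m + 1) (uncurry v)) :
    ContDiff ℝ m (uncurry (partialFst v)) := by
  rw [uncurry_partialFst (hv.differentiable (by simp))]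
  exact (hv.fderiv_right le_rfl).clm_apply contDiff_const

lemma contDiff_partialSnd {m : WithTop ℕ∞} (hv : ContDiff ℝ (m + 1) (uncurry v)) :
    ContDiff ℝ m (uncurry (partialSnd v)) := by
  rw [uncurry_partialSnd (hv.differentiable (by simp))]
  exact (hv.fderiv_right le_rfl).clm_apply contDiff_const

lemma partialSnd_partialFst_comm (hv : ContDiff ℝ 2 (uncurry v)) (s t : ℝ) :
    partialSnd (partialFst v) s t = partialFst (partialSnd v) s t := by
  have hd : Differentiable ℝ (uncurry v) := hv.differentiable (by simp)
  have hd₁ : DifferentiableAt ℝ (fderiv ℝ (uncurry v)) (s, t) :=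
    (hv.fderiv_right (m := 1) le_rfl).differentiable (by simp) (s, t)
  have hfst := (hasDerivAt_fst_of_differentiable
    ((contDiff_partialSnd (m := 1) hv).differentiable (by simp)) s t).deriv
  have hsnd := (hasDerivAt_snd_of_differentiable
    ((contDiff_partialFst (m := 1) hv).differentiable (by simp)) s t).deriv
  rw [uncurry_partialSnd hd, fderiv_clm_apply hd₁ (differentiableAt_const _)] at hfst
  rw [uncurry_partialFst hd, fderiv_clm_apply hd₁ (differentiableAt_const _)] at hsnd
  simp only [fderiv_fun_const, Pi.zero_apply, ContinuousLinearMap.comp_zero, zero_add,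
    ContinuousLinearMap.flip_apply] at hfst hsnd
  exact hsnd.trans ((hv.contDiffAt.isSymmSndFDerivAt (by simp) _ _).trans hfst.symm)

lemma hasDerivAt_intervalIntegral_partialFst (hv : ContDiff ℝ 1 (uncurry v)) (s : ℝ) :
    HasDerivAt (fun σ => ∫ t in a..b, v σ t) (∫ t in a..b, partialFst v s t) s := by
  have hc : Continuous (uncurry v) := hv.continuous
  have hc' : Continuous (uncurry (partialFst v)) := (contDiff_partialFst (m := 0) hv).continuous
  obtain ⟨B, hB⟩ := ((isCompact_closedBall s 1).prod (isCompact_uIcc (a := a) (b := b)))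
    |>.exists_bound_of_continuousOn hc'.continuousOn
  refine (intervalIntegral.hasDerivAt_integral_of_dominated_loc_of_deriv_le (F' := partialFst v)
    (bound := fun _ => B) (Metric.closedBall_mem_nhds s one_pos) ?_
    (hc.uncurry_left s |>.intervalIntegrable _ _) (hc'.uncurry_left s).aestronglyMeasurable ?_
    (by simp) ?_).2
  · exact .of_forall fun σ => (hc.uncurry_left σ).aestronglyMeasurable
  · exact .of_forall fun t ht σ hσ => hB (σ, t) ⟨hσ, uIoc_subset_uIcc ht⟩
  · exact .of_forall fun t _ σ _ => hasDerivAt_partialFst (hv.differentiable (by simp)) σ t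

end PartialDerivatives

lemma add_mul_sq_le (a b x : ℝ) : (a + b * x) ^ 2 ≤ (a ^ 2 + b ^ 2) * (1 + x ^ 2) := by
  linarith [sq_nonneg (a * x - b)]

section HilbertSpace

variable {V : Type*} [NormedAddCommGroup V] [InnerProductSpace ℝ V]

lemma deriv_deriv_quarter_norm_sq {c c' : ℝ → V} {c'' : V} {s : ℝ}
    (hc : ∀ σ, HasDerivAt c (c' σ) σ) (hc' : HasDerivAt c' c'' s) :
    deriv (fun σ => deriv (fun σ' => (1 / 4) * ‖c σ'‖ ^ 2) σ) s
      = (1 / 2) * (‖c' s‖ ^ 2 + inner ℝ (c s) c'') := by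
  have hderiv : (fun σ => deriv (fun σ' => (1 / 4) * ‖c σ'‖ ^ 2) σ)
      = fun σ => (1 / 2) * inner ℝ (c σ) (c' σ) := by
    funext σ
    rw [((hc σ).norm_sq.const_mul (1 / 4 : ℝ)).deriv]
    ring
  rw [hderiv, (((hc s).inner ℝ hc').const_mul (1 / 2 : ℝ)).deriv, real_inner_self_eq_norm_sq,
    add_comm]

/-- The derivative `dF(Y)` of the radial function `F(x) = ¼‖x‖²` along the vector field `Y`.
The functions `a = dF(X^H)` and `f₂ = −dF(∇H)` are both of this form. -/
def radialDeriv (Y : V → V) (x : V) : ℝ := inner ℝ ((1 / 2 : ℝ) • x) (Y x)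

lemma norm_sq_half_smul_add_smul (x y : V) (c : ℝ) :
    ‖(1 / 2 : ℝ) • x + c • y‖ ^ 2 = 1 / 4 * ‖x‖ ^ 2 + c * inner ℝ y x + c ^ 2 * ‖y‖ ^ 2 := by
  rw [norm_add_sq_real, real_inner_smul_left, real_inner_smul_right, norm_smul, norm_smul,
    mul_pow, mul_pow, Real.norm_eq_abs, Real.norm_eq_abs, sq_abs, sq_abs, real_inner_comm]
  ring

lemma abs_two_mul_inner_le (x y : V) : |2 * inner ℝ x y| ≤ ‖x‖ ^ 2 + ‖y‖ ^ 2 := by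
  rw [abs_mul, abs_two]
  linarith [abs_real_inner_le_norm x y, two_mul_le_add_sq ‖x‖ ‖y‖]

lemma contDiff_radialDeriv {m : WithTop ℕ∞} {Y : V → V} (hY : ContDiff ℝ m Y) :
    ContDiff ℝ m (radialDeriv Y) :=
  (contDiff_id.const_smul (1 / 2 : ℝ)).inner ℝ hY

lemma abs_radialDeriv_le (Y : V → V) (x : V) : |radialDeriv Y x| ≤ 1 / 2 * (‖x‖ * ‖Y x‖) := by
  rw [radialDeriv, real_inner_smul_left, abs_mul, abs_of_pos one_half_pos]
  gcongr
  exact abs_real_inner_le_norm _ _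

lemma abs_radialDeriv_le_of_sq_le {Y : V → V} {x : V} {K : ℝ}
    (hY : ‖Y x‖ ^ 2 ≤ K * (1 + ‖x‖ ^ 2)) :
    |radialDeriv Y x| ≤ (1 + K) / 4 * (1 + ‖x‖ ^ 2) := by
  linarith [abs_radialDeriv_le Y x, two_mul_le_add_sq ‖x‖ ‖Y x‖]

lemma fderiv_radialDeriv {Y : V → V} {x : V} (hY : DifferentiableAt ℝ Y x) (w : V) :
    fderiv ℝ (radialDeriv Y) x w
      = 1 / 2 * (inner ℝ w (Y x) + inner ℝ x (fderiv ℝ Y x w)) := by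
  have hderiv : HasFDerivAt (radialDeriv Y) _ x :=
    ((hasFDerivAt_id x).const_smul (1 / 2 : ℝ)).inner ℝ hY.hasFDerivAt
  rw [hderiv.fderiv, ContinuousLinearMap.comp_apply, ContinuousLinearMap.prod_apply,
    fderivInnerCLM_apply]
  simp only [Pi.smul_apply, smul_apply, ContinuousLinearMap.id_apply, id_eq,
    real_inner_smul_left]
  ring

variable [CompleteSpace V]

lemma norm_gradient (f : V → ℝ) (x : V) : ‖gradient f x‖ = ‖fderiv ℝ f x‖ := by
  rw [← toDual_gradient, LinearIsometryEquiv.norm_map]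

lemma norm_gradient_radialDeriv_le {Y : V → V} {x : V} (hY : DifferentiableAt ℝ Y x) :
    ‖gradient (radialDeriv Y) x‖ ≤ 1 / 2 * (‖Y x‖ + ‖x‖ * ‖fderiv ℝ Y x‖) := by
  rw [norm_gradient]
  refine ContinuousLinearMap.opNorm_le_bound _ (by positivity) fun w => ?_
  rw [fderiv_radialDeriv hY, Real.norm_eq_abs, abs_mul, abs_of_pos one_half_pos, mul_assoc]
  gcongr
  calc |inner ℝ w (Y x) + inner ℝ x (fderiv ℝ Y x w)|
      ≤ ‖w‖ * ‖Y x‖ + ‖x‖ * (‖fderiv ℝ Y x‖ * ‖w‖) :=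
        (abs_add_le _ _).trans <| add_le_add (abs_real_inner_le_norm _ _) <|
          (abs_real_inner_le_norm _ _).trans <| by gcongr; exact (fderiv ℝ Y x).le_opNorm w
    _ = (‖Y x‖ + ‖x‖ * ‖fderiv ℝ Y x‖) * ‖w‖ := by ring

lemma norm_gradient_radialDeriv_sq_le {Y : V → V} {x : V} {h M : ℝ}
    (hY : DifferentiableAt ℝ Y x) (hnorm : ‖Y x‖ ≤ h + M * ‖x‖) (hderiv : ‖fderiv ℝ Y x‖ ≤ M) :
    ‖gradient (radialDeriv Y) x‖ ^ 2 ≤ (h ^ 2 + M ^ 2) * (1 + ‖x‖ ^ 2) := by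
  have hlin : ‖gradient (radialDeriv Y) x‖ ≤ h / 2 + M * ‖x‖ := by
    linarith [norm_gradient_radialDeriv_le hY,
      mul_le_mul_of_nonneg_left hderiv (norm_nonneg x)]
  calc ‖gradient (radialDeriv Y) x‖ ^ 2 ≤ (h / 2 + M * ‖x‖) ^ 2 := by gcongr
    _ ≤ ((h / 2) ^ 2 + M ^ 2) * (1 + ‖x‖ ^ 2) := add_mul_sq_le _ _ _
    _ ≤ (h ^ 2 + M ^ 2) * (1 + ‖x‖ ^ 2) := by gcongr ?_ * _; linarith [sq_nonneg h]

lemma contDiff_gradient {m : WithTop ℕ∞} {f : V → ℝ} (hf : ContDiff ℝ (m + 1) f) :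
    ContDiff ℝ m (gradient f) :=
  (InnerProductSpace.toDual ℝ V).symm.contDiff.comp (hf.fderiv_right le_rfl)

lemma continuous_gradient {f : V → ℝ} (hf : ContDiff ℝ 1 f) : Continuous (gradient f) :=
  (contDiff_gradient (m := 0) hf).continuous

lemma norm_fderiv_gradient (f : V → ℝ) (x : V) :
    ‖fderiv ℝ (gradient f) x‖ = ‖iteratedFDeriv ℝ 2 f x‖ := by
  rw [← norm_iteratedFDeriv_one, ← norm_iteratedFDeriv_fderiv (n := 1)]
  exact (InnerProductSpace.toDual ℝ V).symm.norm_iteratedFDeriv_comp_left (fderiv ℝ f) x 1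

end HilbertSpace

section IntervalAverage

variable {φ B : ℝ → ℝ} {a b x : ℝ}

lemma abs_sub_interval_average_le_integral (hab : a < b) (hφ : ContinuousOn φ (Icc a b))
    (hφ' : DifferentiableOn ℝ φ (Ioo a b)) (hB : ∀ t ∈ Ioo a b, |deriv φ t| ≤ B t)
    (hBi : IntervalIntegrable B volume a b) (hx : x ∈ Icc a b) :
    |φ x - ⨍ t in a..b, φ t| ≤ ∫ t in a..b, B t := by
  have hB₀ : 0 ≤ᵐ[volume.restrict (Ioc a b)] B := by
    rw [← restrict_Ioo_eq_restrict_Ioc]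
    exact (ae_restrict_mem measurableSet_Ioo).mono fun t ht => (abs_nonneg _).trans (hB t ht)
  have osc {y z : ℝ} (hay : a ≤ y) (hyz : y ≤ z) (hzb : z ≤ b) :
      |φ z - φ y| ≤ ∫ t in a..b, B t :=
    calc |φ z - φ y| ≤ ∫ t in y..z, B t :=
          norm_sub_le_integral_of_norm_deriv_le_of_le hyz (hφ.mono (Icc_subset_Icc hay hzb))
            (hφ'.mono (Ioo_subset_Ioo hay hzb))
            (.of_forall fun t ht => hB t (Ioo_subset_Ioo hay hzb ht))
            (hBi.mono_set <| by
              rw [uIcc_of_le hyz, uIcc_of_le hab.le]; exact Icc_subset_Icc hay hzb)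
      _ ≤ ∫ t in a..b, B t := integral_mono_interval hay hyz hzb hB₀ hBi
  obtain ⟨c, hc, hφc⟩ := exists_eq_interval_average hab.ne (by rwa [uIcc_of_le hab.le])
  rw [uIoo_of_lt hab] at hc
  rw [← hφc]
  rcases le_total c x with hcx | hxc
  · exact osc hc.1.le hcx hx.2
  · exact abs_sub_comm (φ x) (φ c) ▸ osc hx.1 hxc hc.2.le

end IntervalAverage

section ComplexStructure

variable {n : ℕ}

/-- The complex structure `J₀` bundled as a real linear isometry of phase space. -/
def J0Isometry (n : ℕ) : E n →ₗᵢ[ℝ] E n where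
  toFun := J0
  map_add' := smul_add _
  map_smul' c x := smul_comm _ c x
  norm_map' x := show ‖Complex.I • x‖ = ‖x‖ by rw [norm_smul, Complex.norm_I, one_mul]

lemma norm_J0 (x : E n) : ‖J0 x‖ = ‖x‖ := (J0Isometry n).norm_map x

lemma inner_J0_J0 (x y : E n) : inner ℝ (J0 x) (J0 y) = inner ℝ x y :=
  (J0Isometry n).inner_map_map x y

lemma J0_J0 (x : E n) : J0 (J0 x) = -x := by
  rw [J0, J0, smul_smul, Complex.I_mul_I, neg_one_smul]

lemma J0_neg (x : E n) : J0 (-x) = -J0 x := (J0Isometry n).map_neg x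

lemma J0_add (x y : E n) : J0 (x + y) = J0 x + J0 y := (J0Isometry n).map_add x y

lemma J0_sub (x y : E n) : J0 (x - y) = J0 x - J0 y := (J0Isometry n).map_sub x y

lemma J0_smul (c : ℝ) (x : E n) : J0 (c • x) = c • J0 x := (J0Isometry n).map_smul c x

lemma hasDerivAt_J0 {c : ℝ → E n} {c' : E n} {s : ℝ} (hc : HasDerivAt c c' s) :
    HasDerivAt (fun σ => J0 (c σ)) (J0 c') s :=
  (J0Isometry n).toContinuousLinearMap.hasFDerivAt.comp_hasDerivAt s hc

end ComplexStructure

section Hamiltonian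

variable {n : ℕ} {H : E n → ℝ}

lemma afun_eq_radialDeriv (H : E n → ℝ) : afun H = radialDeriv (XH H) := rfl

lemma f2fun_eq_radialDeriv (H : E n → ℝ) : f2fun H = radialDeriv (-gradient H) :=
  funext fun _ => (inner_neg_right _ _).symm

lemma contDiff_XH {m : WithTop ℕ∞} (hH : ContDiff ℝ (m + 1) H) : ContDiff ℝ m (XH H) :=
  (J0Isometry n).contDiff.comp (contDiff_gradient hH)

lemma differentiable_gradient (hH : ContDiff ℝ 2 H) : Differentiable ℝ (gradient H) :=
  (contDiff_gradient (m := 1) hH).differentiable one_ne_zero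

lemma hasFDerivAt_XH (hH : ContDiff ℝ 2 H) (x : E n) :
    HasFDerivAt (XH H) ((J0Isometry n).toContinuousLinearMap ∘L fderiv ℝ (gradient H) x) x :=
  (J0Isometry n).toContinuousLinearMap.hasFDerivAt.comp x
    (differentiable_gradient hH x).hasFDerivAt

lemma inner_gradient_afun (hH : ContDiff ℝ 2 H) (x w : E n) :
    inner ℝ (gradient (afun H) x) w
      = 1 / 2 * (inner ℝ w (J0 (gradient H x)) + inner ℝ x (J0 (fderiv ℝ (gradient H) x w))) := by
  rw [inner_gradient_left, afun_eq_radialDeriv,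
    fderiv_radialDeriv (hasFDerivAt_XH hH x).differentiableAt, (hasFDerivAt_XH hH x).fderiv]
  rfl

lemma inner_gradient_f2fun (hH : ContDiff ℝ 2 H) (x w : E n) :
    inner ℝ (gradient (f2fun H) x) w
      = -(1 / 2 * (inner ℝ w (gradient H x) + inner ℝ x (fderiv ℝ (gradient H) x w))) := by
  rw [inner_gradient_left, f2fun_eq_radialDeriv,
    fderiv_radialDeriv (differentiable_gradient hH x).neg, fderiv_neg]
  simp only [Pi.neg_apply, neg_apply, inner_neg_right]
  ring

lemma continuous_f1fun (hH : ContDiff ℝ 2 H) : Continuous (f1fun H) := by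
  have hG : Continuous (gradient H) := (differentiable_gradient hH).continuous
  have hXH : ContDiff ℝ 1 (XH H) := contDiff_XH hH
  have ha : Continuous (gradient (afun H)) :=
    continuous_gradient (contDiff_radialDeriv hXH)
  have hf₂ : Continuous (gradient (f2fun H)) := by
    rw [f2fun_eq_radialDeriv]
    exact continuous_gradient (contDiff_radialDeriv (contDiff_gradient hH).neg)
  exact (((ha.inner hXH.continuous).sub (hG.norm.pow 2)).sub (hf₂.norm.pow 2)).sub (ha.norm.pow 2)

lemma continuous_f2fun (hH : ContDiff ℝ 1 H) : Continuous (f2fun H) := by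
  rw [f2fun_eq_radialDeriv]
  exact (contDiff_radialDeriv (m := 0) (contDiff_gradient hH).neg).continuous

end Hamiltonian

/-- A solution `(v, η)` of the Floer equations for `(H, J₀)` with `v` of class `C²`, where `t`
ranges over the real line and `v` need not be periodic in `t`. -/
structure IsFloerSolution {n : ℕ} (H : E n → ℝ) (v : ℝ → ℝ → E n) (η : ℝ → ℝ) : Prop where
  contDiff : ContDiff ℝ 2 (uncurry v)
  partialFst_eq_neg : ∀ s t, partialFst v s t = -J0 (partialSnd v s t - η s • XH H (v s t))
  hasDerivAt_eta : ∀ s, HasDerivAt η (-∫ t in (0 : ℝ)..1, H (v s t)) s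

/-- The function `f(s, t) = η(s)² f₁(v(s, t)) + η'(s) f₂(v(s, t))`, which bounds `Δ(F ∘ v)` from
below. -/
def lapLowerBound {n : ℕ} (H : E n → ℝ) (v : ℝ → ℝ → E n) (η : ℝ → ℝ) (p : ℝ × ℝ) : ℝ :=
  η p.1 ^ 2 * f1fun H (v p.1 p.2) + deriv η p.1 * f2fun H (v p.1 p.2)

section EllipticInequality

variable {n : ℕ} {H : E n → ℝ} {v : ℝ → ℝ → E n} {η : ℝ → ℝ}

lemma FloerAut.isFloerSolution (hu : FloerAut H v η) : IsFloerSolution H v η where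
  contDiff := contDiff_infty.1 hu.1 2
  partialFst_eq_neg := hu.2.2.2.1
  hasDerivAt_eta s := hu.2.2.2.2 s ▸ (hu.2.1.differentiable (by simp) s).hasDerivAt

namespace IsFloerSolution

lemma differentiable (hu : IsFloerSolution H v η) : Differentiable ℝ (uncurry v) :=
  hu.contDiff.differentiable two_ne_zero

lemma deriv_eta (hu : IsFloerSolution H v η) (s : ℝ) :
    deriv η s = -∫ t in (0 : ℝ)..1, H (v s t) :=
  (hu.hasDerivAt_eta s).deriv

lemma partialFst_eq (hu : IsFloerSolution H v η) (s t : ℝ) :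
    partialFst v s t = -J0 (partialSnd v s t) - η s • gradient H (v s t) := by
  rw [hu.partialFst_eq_neg, XH, J0_sub, J0_smul, J0_J0]
  module

lemma partialSnd_eq (hu : IsFloerSolution H v η) (s t : ℝ) :
    partialSnd v s t = J0 (partialFst v s t) + η s • J0 (gradient H (v s t)) := by
  rw [hu.partialFst_eq, J0_sub, J0_neg, J0_J0, J0_smul]
  module

lemma hasDerivAt_partialFst_fst (hH : ContDiff ℝ 2 H) (hu : IsFloerSolution H v η) (s t : ℝ) :
    HasDerivAt (fun σ => partialFst v σ t)
      (-J0 (partialFst (partialSnd v) s t)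
        - (η s • fderiv ℝ (gradient H) (v s t) (partialFst v s t)
          + deriv η s • gradient H (v s t))) s := by
  have hG : HasDerivAt (fun σ => gradient H (v σ t))
      (fderiv ℝ (gradient H) (v s t) (partialFst v s t)) s :=
    HasFDerivAt.comp_hasDerivAt (f := fun σ => v σ t) s
      (differentiable_gradient hH (v s t)).hasFDerivAt (hasDerivAt_partialFst hu.differentiable s t)
  have hvt : HasDerivAt (fun σ => partialSnd v σ t) (partialFst (partialSnd v) s t) s :=
    hasDerivAt_partialFst
      ((contDiff_partialSnd (m := 1) hu.contDiff).differentiable one_ne_zero) s t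
  rw [hu.deriv_eta]
  exact ((hasDerivAt_J0 hvt).neg.sub ((hu.hasDerivAt_eta s).smul hG)).congr_of_eventuallyEq
    (.of_forall fun σ => hu.partialFst_eq σ t)

lemma hasDerivAt_partialSnd_snd (hH : ContDiff ℝ 2 H) (hu : IsFloerSolution H v η) (s t : ℝ) :
    HasDerivAt (partialSnd v s)
      (J0 (partialFst (partialSnd v) s t)
        + η s • J0 (fderiv ℝ (gradient H) (v s t) (partialSnd v s t))) t := by
  have hG : HasDerivAt (fun τ => gradient H (v s τ))
      (fderiv ℝ (gradient H) (v s t) (partialSnd v s t)) t :=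
    (differentiable_gradient hH (v s t)).hasFDerivAt.comp_hasDerivAt t
      (hasDerivAt_partialSnd hu.differentiable s t)
  have hvs : HasDerivAt (partialFst v s) (partialFst (partialSnd v) s t) t :=
    partialSnd_partialFst_comm hu.contDiff s t ▸ hasDerivAt_partialSnd
      ((contDiff_partialFst (m := 1) hu.contDiff).differentiable one_ne_zero) s t
  exact ((hasDerivAt_J0 hvs).add ((hasDerivAt_J0 hG).const_smul (η s))).congr_of_eventuallyEq
    (.of_forall fun τ => hu.partialSnd_eq s τ)

lemma lapF_eq (hH : ContDiff ℝ 2 H) (hu : IsFloerSolution H v η) (s t : ℝ) :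
    lapF v s t = 1 / 2 * (‖partialFst v s t‖ ^ 2 + ‖partialSnd v s t‖ ^ 2
      + inner ℝ (v s t) (η s • J0 (fderiv ℝ (gradient H) (v s t) (partialSnd v s t))
        - (η s • fderiv ℝ (gradient H) (v s t) (partialFst v s t)
          + deriv η s • gradient H (v s t)))) := by
  rw [lapF, deriv_deriv_quarter_norm_sq (fun σ => hasDerivAt_partialFst hu.differentiable σ t)
      (hu.hasDerivAt_partialFst_fst hH s t),
    deriv_deriv_quarter_norm_sq (fun τ => hasDerivAt_partialSnd hu.differentiable s τ)
      (hu.hasDerivAt_partialSnd_snd hH s t)]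
  simp only [inner_add_right, inner_sub_right, inner_neg_right]
  ring

lemma lapF_sub_lapLowerBound (hH : ContDiff ℝ 2 H) (hu : IsFloerSolution H v η) (s t : ℝ) :
    lapF v s t - lapLowerBound H v η (s, t)
      = 1 / 4 * ‖partialFst v s t‖ ^ 2
        + ‖(1 / 2 : ℝ) • partialFst v s t + η s • gradient H (v s t)‖ ^ 2
        + ‖(1 / 2 : ℝ) • partialFst v s t + η s • gradient (f2fun H) (v s t)‖ ^ 2
        + ‖(1 / 2 : ℝ) • J0 (partialFst v s t) + η s • gradient (afun H) (v s t)‖ ^ 2 := by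
  have hvt := hu.partialSnd_eq s t
  have hlap := hu.lapF_eq hH s t
  have hf₂ := inner_gradient_f2fun hH (v s t) (partialFst v s t)
  have ha := inner_gradient_afun hH (v s t) (partialSnd v s t)
  simp only [lapLowerBound, f1fun, f2fun]
  set x := v s t
  set w := partialFst v s t
  set G := gradient H x
  have hvt_sq : ‖partialSnd v s t‖ ^ 2
      = ‖w‖ ^ 2 + 2 * (η s * inner ℝ w G) + η s ^ 2 * ‖G‖ ^ 2 := by
    rw [hvt, norm_add_sq_real, norm_smul, norm_J0, norm_J0, real_inner_smul_right, inner_J0_J0,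
      mul_pow, Real.norm_eq_abs, sq_abs]
  have hvt_JG : inner ℝ (partialSnd v s t) (J0 G) = inner ℝ w G + η s * ‖G‖ ^ 2 := by
    rw [hvt, inner_add_left, real_inner_smul_left, inner_J0_J0, inner_J0_J0,
      real_inner_self_eq_norm_sq]
  have ha_vt : inner ℝ (gradient (afun H) x) (partialSnd v s t)
      = inner ℝ (gradient (afun H) x) (J0 w) + η s * inner ℝ (gradient (afun H) x) (J0 G) := by
    rw [hvt, inner_add_right, real_inner_smul_right]
  rw [hvt_JG, ha_vt] at ha
  rw [hlap, hvt_sq, norm_sq_half_smul_add_smul, norm_sq_half_smul_add_smul,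
    norm_sq_half_smul_add_smul, norm_J0, real_inner_comm w G]
  simp only [inner_add_right, inner_sub_right, real_inner_smul_left, real_inner_smul_right]
  linear_combination -η s * hf₂ - η s * ha

theorem lapLowerBound_le_lapF (hH : ContDiff ℝ 2 H) (hu : IsFloerSolution H v η) (s t : ℝ) :
    lapLowerBound H v η (s, t) ≤ lapF v s t := by
  rw [← sub_nonneg, hu.lapF_sub_lapLowerBound hH]
  positivity

end IsFloerSolution

end EllipticInequality

section GrowthBounds

variable {n : ℕ} {H : E n → ℝ} {M h₁ : ℝ}

lemma GradBound.norm_gradient_sq_le (hG : GradBound H M h₁) (x : E n) :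
    ‖gradient H x‖ ^ 2 ≤ (h₁ ^ 2 + M ^ 2) * (1 + ‖x‖ ^ 2) :=
  calc ‖gradient H x‖ ^ 2 ≤ (h₁ + M * ‖x‖) ^ 2 := by gcongr; exact hG x
    _ ≤ (h₁ ^ 2 + M ^ 2) * (1 + ‖x‖ ^ 2) := add_mul_sq_le _ _ _

lemma HessBound.norm_fderiv_gradient_le (hM : HessBound H M) (x : E n) :
    ‖fderiv ℝ (gradient H) x‖ ≤ M :=
  (norm_fderiv_gradient H x).trans_le (hM x)

lemma norm_gradient_afun_sq_le (hH : ContDiff ℝ 2 H) (hM : HessBound H M)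
    (hG : GradBound H M h₁) (x : E n) :
    ‖gradient (afun H) x‖ ^ 2 ≤ (h₁ ^ 2 + M ^ 2) * (1 + ‖x‖ ^ 2) := by
  rw [afun_eq_radialDeriv]
  refine norm_gradient_radialDeriv_sq_le (hasFDerivAt_XH hH x).differentiableAt ?_ ?_
  · exact (norm_J0 _).trans_le (hG x)
  · rw [(hasFDerivAt_XH hH x).fderiv, LinearIsometry.norm_toContinuousLinearMap_comp]
    exact hM.norm_fderiv_gradient_le x

lemma norm_gradient_f2fun_sq_le (hH : ContDiff ℝ 2 H) (hM : HessBound H M)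
    (hG : GradBound H M h₁) (x : E n) :
    ‖gradient (f2fun H) x‖ ^ 2 ≤ (h₁ ^ 2 + M ^ 2) * (1 + ‖x‖ ^ 2) := by
  rw [f2fun_eq_radialDeriv]
  refine norm_gradient_radialDeriv_sq_le (differentiable_gradient hH x).neg ?_ ?_
  · exact (norm_neg _).trans_le (hG x)
  · rw [fderiv_neg, norm_neg]
    exact hM.norm_fderiv_gradient_le x

lemma abs_f1fun_le (hH : ContDiff ℝ 2 H) (hM : HessBound H M) (hG : GradBound H M h₁) (x : E n) :
    |f1fun H x| ≤ 4 * (h₁ ^ 2 + M ^ 2) * (1 + ‖x‖ ^ 2) := by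
  have hinner := abs_two_mul_inner_le (gradient (afun H) x) (J0 (gradient H x))
  rw [norm_J0] at hinner
  have hgrad := hG.norm_gradient_sq_le x
  have ha := norm_gradient_afun_sq_le hH hM hG x
  have hf₂ := norm_gradient_f2fun_sq_le hH hM hG x
  rw [f1fun, abs_le]
  rw [abs_le] at hinner
  constructor <;> linarith [sq_nonneg ‖gradient H x‖, sq_nonneg ‖gradient (afun H) x‖,
    sq_nonneg ‖gradient (f2fun H) x‖]

lemma abs_f2fun_le (hG : GradBound H M h₁) (x : E n) :
    |f2fun H x| ≤ (1 + (h₁ ^ 2 + M ^ 2)) / 4 * (1 + ‖x‖ ^ 2) := by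
  rw [f2fun_eq_radialDeriv]
  exact abs_radialDeriv_le_of_sq_le <| by
    rw [Pi.neg_apply, norm_neg]; exact hG.norm_gradient_sq_le x

end GrowthBounds

section L2Norm

variable {n : ℕ} {f g : ℝ → E n}

lemma L2_nonneg (f : ℝ → E n) : 0 ≤ L2 f := Real.sqrt_nonneg _

lemma L2_sq (f : ℝ → E n) : L2 f ^ 2 = ∫ t in (0 : ℝ)..1, ‖f t‖ ^ 2 :=
  Real.sq_sqrt (integral_nonneg zero_le_one fun _ _ => by positivity)

lemma intervalIntegrable_norm_sq (hf : Continuous f) :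
    IntervalIntegrable (fun t => ‖f t‖ ^ 2) volume 0 1 :=
  (hf.norm.pow 2).intervalIntegrable _ _

lemma L2_smul_sq (c : ℝ) (f : ℝ → E n) : L2 (fun t => c • f t) ^ 2 = c ^ 2 * L2 f ^ 2 := by
  simp only [L2_sq, norm_smul, mul_pow, Real.norm_eq_abs, sq_abs,
    intervalIntegral.integral_const_mul]

lemma L2_congr_norm (h : ∀ t, ‖f t‖ = ‖g t‖) : L2 f = L2 g := by
  simp only [L2, h]

lemma integral_abs_two_mul_inner_le_L2_sq_add (hf : Continuous f) (hg : Continuous g) :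
    ∫ t in (0 : ℝ)..1, |2 * inner ℝ (f t) (g t)| ≤ L2 f ^ 2 + L2 g ^ 2 := by
  rw [L2_sq, L2_sq, ← integral_add (intervalIntegrable_norm_sq hf) (intervalIntegrable_norm_sq hg)]
  exact integral_mono zero_le_one
    (((hf.inner hg).const_mul 2).abs.intervalIntegrable _ _)
    ((intervalIntegrable_norm_sq hf).add (intervalIntegrable_norm_sq hg))
    fun t => abs_two_mul_inner_le (f t) (g t)

lemma L2_add_sq_le (hf : Continuous f) (hg : Continuous g) :
    L2 (fun t => f t + g t) ^ 2 ≤ 2 * L2 f ^ 2 + 2 * L2 g ^ 2 := by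
  have hfi := intervalIntegrable_norm_sq hf
  have hgi := intervalIntegrable_norm_sq hg
  simp only [L2_sq, ← mul_add]
  rw [← integral_add hfi hgi, ← intervalIntegral.integral_const_mul]
  refine integral_mono zero_le_one (intervalIntegrable_norm_sq (hf.add hg))
    ((hfi.add hgi).const_mul 2) fun t => ?_
  exact (pow_le_pow_left₀ (norm_nonneg _) (norm_add_le _ _) 2).trans add_sq_le

lemma norm_sq_le_of_hasDerivAt (hf : ∀ t, HasDerivAt f (g t) t) (hg : Continuous g) {t : ℝ}
    (ht : t ∈ Icc (0 : ℝ) 1) : ‖f t‖ ^ 2 ≤ 2 * L2 f ^ 2 + L2 g ^ 2 := by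
  have hfc : Continuous f := continuous_iff_continuousAt.2 fun t => (hf t).continuousAt
  have hosc := abs_sub_interval_average_le_integral (φ := fun t => ‖f t‖ ^ 2)
    (B := fun t => |2 * inner ℝ (f t) (g t)|) zero_lt_one (hfc.norm.pow 2).continuousOn
    (fun t _ => (hf t).norm_sq.differentiableAt.differentiableWithinAt)
    (fun t _ => (congrArg abs (hf t).norm_sq.deriv).le)
    (((hfc.inner hg).const_mul 2).abs.intervalIntegrable _ _) ht
  rw [interval_average_eq_div, sub_zero, div_one, ← L2_sq] at hosc
  linarith [le_of_abs_le hosc, integral_abs_two_mul_inner_le_L2_sq_add hfc hg]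

/-- A bound for `‖∇H(w)‖²_{L²}` over loops `w` with `‖w‖_{L²} ≤ b`, given the growth
`‖∇H(x)‖ ≤ h₁ + M‖x‖`. -/
def gradL2Bound (M h₁ b : ℝ) : ℝ := (h₁ ^ 2 + M ^ 2) * (1 + b ^ 2)

lemma gradL2Bound_nonneg (M h₁ b : ℝ) : 0 ≤ gradL2Bound M h₁ b := by
  unfold gradL2Bound; positivity

lemma integral_one_add_norm_sq_le {b : ℝ} (hf : Continuous f) (hb : L2 f ≤ b) :
    ∫ t in (0 : ℝ)..1, (1 + ‖f t‖ ^ 2) ≤ 1 + b ^ 2 := by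
  rw [integral_add (by simp) (intervalIntegrable_norm_sq hf), ← L2_sq,
    intervalIntegral.integral_const, sub_zero, one_smul]
  gcongr
  exact L2_nonneg f

lemma GradBound.L2_gradient_sq_le {H : E n → ℝ} {M h₁ b : ℝ} (hG : GradBound H M h₁)
    (hH : ContDiff ℝ 1 H) (hf : Continuous f) (hb : L2 f ≤ b) :
    L2 (fun t => gradient H (f t)) ^ 2 ≤ gradL2Bound M h₁ b := by
  have hGf : Continuous fun t => gradient H (f t) :=
    (continuous_gradient hH).comp hf
  rw [L2_sq]
  calc ∫ t in (0 : ℝ)..1, ‖gradient H (f t)‖ ^ 2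
      ≤ ∫ t in (0 : ℝ)..1, (h₁ ^ 2 + M ^ 2) * (1 + ‖f t‖ ^ 2) :=
        integral_mono zero_le_one (intervalIntegrable_norm_sq hGf)
          (Continuous.intervalIntegrable (by fun_prop) _ _)
          fun t => hG.norm_gradient_sq_le (f t)
    _ ≤ gradL2Bound M h₁ b := by
        rw [intervalIntegral.integral_const_mul, gradL2Bound]
        gcongr
        exact integral_one_add_norm_sq_le hf hb

end L2Norm

section Integrals

lemma integrable_and_integral_le_of_lintegral_ofReal_le {α : Type*} [MeasurableSpace α]
    {μ : Measure α} {f : α → ℝ} {b : ℝ} (hf : AEStronglyMeasurable f μ) (hf₀ : ∀ x, 0 ≤ f x)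
    (hb : 0 ≤ b) (hfb : ∫⁻ x, ENNReal.ofReal (f x) ∂μ ≤ ENNReal.ofReal b) :
    Integrable f μ ∧ ∫ x, f x ∂μ ≤ b := by
  refine ⟨⟨hf, ?_⟩, ?_⟩
  · rw [hasFiniteIntegral_iff_ofReal (.of_forall hf₀)]
    exact hfb.trans_lt ENNReal.ofReal_lt_top
  · rw [integral_eq_lintegral_of_nonneg_ae (.of_forall hf₀) hf]
    exact ENNReal.toReal_le_of_le_ofReal hb hfb

lemma mul_volume_real_Icc_le_integral {e : ℝ → ℝ} {c a b : ℝ} (he : Integrable e)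
    (he₀ : ∀ s, 0 ≤ e s) (hc : ∀ s ∈ Ioo a b, c ≤ e s) :
    c * volume.real (Icc a b) ≤ ∫ s, e s :=
  calc c * volume.real (Icc a b) = ∫ _ in Ioo a b, c := by
        rw [setIntegral_const, smul_eq_mul, mul_comm, measureReal_congr Ioo_ae_eq_Icc]
    _ ≤ ∫ s in Ioo a b, e s :=
        setIntegral_mono_on (integrableOn_const measure_Ioo_lt_top.ne) he.integrableOn
          measurableSet_Ioo hc
    _ ≤ ∫ s, e s := setIntegral_le_integral he (.of_forall he₀)

lemma setIntegral_le_integral_intervalIntegral {f : ℝ × ℝ → ℝ} (hf : Continuous f)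
    (hf₀ : ∀ p, 0 ≤ f p) {Ω : Set (ℝ × ℝ)} {a b : ℝ} (hΩ : Ω ⊆ Icc a b ×ˢ Icc 0 1) :
    IntegrableOn f Ω ∧ ∫ p in Ω, f p ≤ ∫ s in Icc a b, ∫ t in (0 : ℝ)..1, f (s, t) := by
  have hfi : IntegrableOn f (Icc a b ×ˢ Icc 0 1) :=
    hf.continuousOn.integrableOn_compact (isCompact_Icc.prod isCompact_Icc)
  refine ⟨hfi.mono_set hΩ, ?_⟩
  calc ∫ p in Ω, f p ≤ ∫ p in Icc a b ×ˢ Icc 0 1, f p :=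
        setIntegral_mono_set hfi (.of_forall hf₀) (.of_forall hΩ)
    _ = ∫ s in Icc a b, ∫ t in (0 : ℝ)..1, f (s, t) := by
        rw [Measure.volume_eq_prod] at hfi ⊢
        rw [setIntegral_prod _ hfi]
        simp only [integral_Icc_eq_integral_Ioc, integral_of_le zero_le_one]

lemma continuous_L2_sq {n : ℕ} {w : ℝ → ℝ → E n} (hw : Continuous (uncurry w)) :
    Continuous fun s => L2 (w s) ^ 2 := by
  simp only [L2_sq]
  exact continuous_parametric_intervalIntegral_of_continuous' (f := fun s t => ‖w s t‖ ^ 2)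
    (hw.norm.fun_pow 2) 0 1

end Integrals

section Energy

variable {n : ℕ} {H : E n → ℝ} {v : ℝ → ℝ → E n} {η : ℝ → ℝ} {M h₁ 𝔢 𝔶 vb ε s t : ℝ}

/-- The energy density `‖∂_s v(s)‖²_{L²} + |η'(s)|²` of the curve `s ↦ (v(s, ·), η(s))`. -/
def energyDensity (v : ℝ → ℝ → E n) (η : ℝ → ℝ) (s : ℝ) : ℝ :=
  L2 (partialFst v s) ^ 2 + deriv η s ^ 2

lemma energyDensity_nonneg (v : ℝ → ℝ → E n) (η : ℝ → ℝ) (s : ℝ) : 0 ≤ energyDensity v η s := by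
  unfold energyDensity; positivity

lemma L2_partialFst_sq_le_energyDensity (v : ℝ → ℝ → E n) (η : ℝ → ℝ) (s : ℝ) :
    L2 (partialFst v s) ^ 2 ≤ energyDensity v η s :=
  le_add_of_nonneg_right (sq_nonneg _)

lemma deriv_sq_le_energyDensity (v : ℝ → ℝ → E n) (η : ℝ → ℝ) (s : ℝ) :
    deriv η s ^ 2 ≤ energyDensity v η s :=
  le_add_of_nonneg_left (sq_nonneg _)

/-- A bound for `|η'|²` along solutions of energy at most `𝔢` with `‖v(s)‖_{L²} ≤ vb`. -/
def derivEtaSqBound (M h₁ 𝔢 vb : ℝ) : ℝ := (gradL2Bound M h₁ vb + 2) * 𝔢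

/-- The constant `α` in the pointwise bound `1 + ‖v(s, t)‖² ≤ α + 2‖∂_s v(s)‖²_{L²}`. -/
def supConst (M h₁ 𝔶 vb : ℝ) : ℝ := 1 + 2 * vb ^ 2 + 2 * 𝔶 ^ 2 * gradL2Bound M h₁ vb

lemma supConst_nonneg (M h₁ 𝔶 vb : ℝ) : 0 ≤ supConst M h₁ 𝔶 vb := by
  have := gradL2Bound_nonneg M h₁ vb
  unfold supConst; positivity

/-- The constant `c` in `|η² f₁(x) + η' f₂(x)| ≤ c (1 + ‖x‖²)`, for `|η| ≤ 𝔶` and `η'² ≤ d`. -/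
def lapCoeff (M h₁ 𝔶 d : ℝ) : ℝ :=
  4 * (h₁ ^ 2 + M ^ 2) * 𝔶 ^ 2 + (1 + (h₁ ^ 2 + M ^ 2)) / 4 * √d

lemma abs_lapLowerBound_le {d : ℝ} (hH : ContDiff ℝ 2 H) (hM : HessBound H M)
    (hG : GradBound H M h₁) (hη : |η s| ≤ 𝔶) (hη' : deriv η s ^ 2 ≤ d) :
    |lapLowerBound H v η (s, t)| ≤ lapCoeff M h₁ 𝔶 d * (1 + ‖v s t‖ ^ 2) :=
  calc |lapLowerBound H v η (s, t)|
      ≤ η s ^ 2 * |f1fun H (v s t)| + |deriv η s| * |f2fun H (v s t)| := by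
        refine (abs_add_le _ _).trans_eq ?_
        rw [abs_mul, abs_mul, abs_sq]
    _ ≤ 𝔶 ^ 2 * (4 * (h₁ ^ 2 + M ^ 2) * (1 + ‖v s t‖ ^ 2))
        + √d * ((1 + (h₁ ^ 2 + M ^ 2)) / 4 * (1 + ‖v s t‖ ^ 2)) := by
        gcongr ?_ * ?_ + ?_ * ?_
        · exact sq_le_sq.2 (hη.trans (le_abs_self _))
        · exact abs_f1fun_le hH hM hG _
        · exact Real.abs_le_sqrt hη'
        · exact abs_f2fun_le hG _
    _ = lapCoeff M h₁ 𝔶 d * (1 + ‖v s t‖ ^ 2) := by rw [lapCoeff]; ring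

namespace IsFloerSolution

lemma continuous_partialFst (hu : IsFloerSolution H v η) : Continuous (uncurry (partialFst v)) :=
  (contDiff_partialFst (m := 1) hu.contDiff).continuous

lemma hasDerivAt_deriv_eta (hH : ContDiff ℝ 1 H) (hu : IsFloerSolution H v η) (s : ℝ) :
    HasDerivAt (deriv η)
      (-∫ t in (0 : ℝ)..1, inner ℝ (gradient H (v s t)) (partialFst v s t)) s := by
  have hHv : ContDiff ℝ 1 (uncurry fun s t => H (v s t)) :=
    hH.comp (hu.contDiff.of_le one_le_two)
  have hHvs (t : ℝ) : partialFst (fun s t => H (v s t)) s t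
      = inner ℝ (gradient H (v s t)) (partialFst v s t) := by
    rw [inner_gradient_left]
    exact ((hH.differentiable one_ne_zero _).hasFDerivAt.comp_hasDerivAt s
      (hasDerivAt_partialFst hu.differentiable s t)).deriv
  rw [funext hu.deriv_eta]
  simpa only [hHvs] using (hasDerivAt_intervalIntegral_partialFst hHv s).fun_neg

lemma continuous_deriv_eta (hH : ContDiff ℝ 1 H) (hu : IsFloerSolution H v η) :
    Continuous (deriv η) :=
  continuous_iff_continuousAt.2 fun s => (hu.hasDerivAt_deriv_eta hH s).continuousAt

lemma continuous_energyDensity (hH : ContDiff ℝ 1 H) (hu : IsFloerSolution H v η) :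
    Continuous (energyDensity v η) :=
  (continuous_L2_sq hu.continuous_partialFst).add ((hu.continuous_deriv_eta hH).pow 2)

lemma continuous_lapLowerBound (hH : ContDiff ℝ 2 H) (hu : IsFloerSolution H v η) :
    Continuous (lapLowerBound H v η) := by
  have hη : Continuous η :=
    continuous_iff_continuousAt.2 fun s => (hu.hasDerivAt_eta s).continuousAt
  have hv : Continuous (uncurry v) := hu.contDiff.continuous
  have hH₁ : ContDiff ℝ 1 H := hH.of_le one_le_two
  exact (((hη.comp continuous_fst).pow 2).mul ((continuous_f1fun hH).comp hv)).add
    (((hu.continuous_deriv_eta hH₁).comp continuous_fst).mul ((continuous_f2fun hH₁).comp hv))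

lemma gradNorm_eq (hu : IsFloerSolution H v η) (s : ℝ) :
    gradNorm H (v s) (η s) = L2 (partialFst v s) + |deriv η s| := by
  have hnorm (t : ℝ) : ‖partialSnd v s t - η s • XH H (v s t)‖ = ‖partialFst v s t‖ := by
    rw [hu.partialSnd_eq, XH, add_sub_cancel_right, norm_J0]
  rw [gradNorm, hu.deriv_eta, abs_neg]
  exact congrArg (· + _) (L2_congr_norm hnorm)

lemma sq_div_two_le_energyDensity (hu : IsFloerSolution H v η) (hε : 0 ≤ ε)
    (hgrad : ε ≤ gradNorm H (v s) (η s)) : ε ^ 2 / 2 ≤ energyDensity v η s := by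
  rw [hu.gradNorm_eq] at hgrad
  have hsq : ε ^ 2 ≤ 2 * energyDensity v η s :=
    calc ε ^ 2 ≤ (L2 (partialFst v s) + |deriv η s|) ^ 2 := by gcongr
      _ ≤ 2 * (L2 (partialFst v s) ^ 2 + |deriv η s| ^ 2) := add_sq_le
      _ = 2 * energyDensity v η s := by rw [sq_abs, energyDensity]
  linarith

lemma abs_deriv_deriv_eta_sq_le (hH : ContDiff ℝ 1 H) (hu : IsFloerSolution H v η)
    (hG : GradBound H M h₁) (hvb : L2 (v s) ≤ vb) :
    |deriv (fun σ => deriv η σ ^ 2) s| ≤ (gradL2Bound M h₁ vb + 1) * energyDensity v η s := by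
  have hvs : Continuous (v s) := hu.contDiff.continuous.uncurry_left s
  have hGv : Continuous fun t => deriv η s • gradient H (v s t) :=
    ((continuous_gradient hH).comp hvs).fun_const_smul _
  have hderiv : deriv (fun σ => deriv η σ ^ 2) s
      = -∫ t in (0 : ℝ)..1, 2 * inner ℝ (deriv η s • gradient H (v s t)) (partialFst v s t) := by
    rw [((hu.hasDerivAt_deriv_eta hH s).fun_pow 2).deriv]
    simp only [real_inner_smul_left, intervalIntegral.integral_const_mul]
    ring
  rw [hderiv, abs_neg]
  calc |∫ t in (0 : ℝ)..1, 2 * inner ℝ (deriv η s • gradient H (v s t)) (partialFst v s t)|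
      ≤ ∫ t in (0 : ℝ)..1, |2 * inner ℝ (deriv η s • gradient H (v s t)) (partialFst v s t)| :=
        abs_integral_le_integral_abs zero_le_one
    _ ≤ deriv η s ^ 2 * L2 (fun t => gradient H (v s t)) ^ 2 + L2 (partialFst v s) ^ 2 := by
        rw [← L2_smul_sq]
        exact integral_abs_two_mul_inner_le_L2_sq_add hGv (hu.continuous_partialFst.uncurry_left s)
    _ ≤ energyDensity v η s * gradL2Bound M h₁ vb + energyDensity v η s := by
        gcongr
        · exact energyDensity_nonneg v η s
        · exact deriv_sq_le_energyDensity v η s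
        · exact hG.L2_gradient_sq_le hH hvs hvb
        · exact L2_partialFst_sq_le_energyDensity v η s
    _ = (gradL2Bound M h₁ vb + 1) * energyDensity v η s := by ring

lemma deriv_eta_sq_le (hH : ContDiff ℝ 1 H) (hu : IsFloerSolution H v η) (hG : GradBound H M h₁)
    (hvb : ∀ s, L2 (v s) ≤ vb) (he : Integrable (energyDensity v η))
    (he_le : ∫ s, energyDensity v η s ≤ 𝔢) (s : ℝ) :
    deriv η s ^ 2 ≤ derivEtaSqBound M h₁ 𝔢 vb := by
  have hη'_sq : Differentiable ℝ fun σ => deriv η σ ^ 2 := fun σ =>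
    ((hu.hasDerivAt_deriv_eta hH σ).fun_pow 2).differentiableAt
  have henergy : ∫ σ in s..(s + 1), energyDensity v η σ ≤ 𝔢 := by
    rw [integral_of_le (by simp)]
    exact (setIntegral_le_integral he (.of_forall (energyDensity_nonneg v η))).trans he_le
  have hosc := abs_sub_interval_average_le_integral (lt_add_one s)
    hη'_sq.continuous.continuousOn hη'_sq.differentiableOn
    (fun σ _ => hu.abs_deriv_deriv_eta_sq_le hH hG (hvb σ)) (he.intervalIntegrable.const_mul _)
    (left_mem_Icc.2 (lt_add_one s).le)
  rw [interval_average_eq_div, add_sub_cancel_left, div_one,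
    intervalIntegral.integral_const_mul] at hosc
  have hmean : ∫ σ in s..(s + 1), deriv η σ ^ 2 ≤ ∫ σ in s..(s + 1), energyDensity v η σ :=
    integral_mono (lt_add_one s).le (hη'_sq.continuous.intervalIntegrable _ _)
      he.intervalIntegrable (deriv_sq_le_energyDensity v η)
  have hκ : (gradL2Bound M h₁ vb + 1) * ∫ σ in s..(s + 1), energyDensity v η σ
      ≤ (gradL2Bound M h₁ vb + 1) * 𝔢 := by
    have := gradL2Bound_nonneg M h₁ vb
    gcongr
  rw [derivEtaSqBound]
  linarith [le_of_abs_le hosc]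

lemma L2_partialSnd_sq_le (hH : ContDiff ℝ 1 H) (hu : IsFloerSolution H v η)
    (hG : GradBound H M h₁) (hvb : L2 (v s) ≤ vb) (hη : |η s| ≤ 𝔶) :
    L2 (partialSnd v s) ^ 2
      ≤ 2 * L2 (partialFst v s) ^ 2 + 2 * (𝔶 ^ 2 * gradL2Bound M h₁ vb) := by
  have hvs : Continuous (v s) := hu.contDiff.continuous.uncurry_left s
  have hGv : Continuous fun t => η s • gradient H (v s t) :=
    ((continuous_gradient hH).comp hvs).fun_const_smul _
  have hnorm (t : ℝ) : ‖partialSnd v s t‖ = ‖partialFst v s t + η s • gradient H (v s t)‖ := by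
    rw [hu.partialSnd_eq, ← J0_smul, ← J0_add, norm_J0]
  calc L2 (partialSnd v s) ^ 2
      = L2 (fun t => partialFst v s t + η s • gradient H (v s t)) ^ 2 := by
        rw [L2_congr_norm hnorm]
    _ ≤ 2 * L2 (partialFst v s) ^ 2
        + 2 * (η s ^ 2 * L2 (fun t => gradient H (v s t)) ^ 2) := by
        rw [← L2_smul_sq]
        exact L2_add_sq_le (hu.continuous_partialFst.uncurry_left s) hGv
    _ ≤ 2 * L2 (partialFst v s) ^ 2 + 2 * (𝔶 ^ 2 * gradL2Bound M h₁ vb) := by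
        gcongr 2 * L2 (partialFst v s) ^ 2 + 2 * (?_ * ?_)
        · exact sq_le_sq.2 (hη.trans (le_abs_self _))
        · exact hG.L2_gradient_sq_le hH hvs hvb

lemma one_add_norm_sq_le (hH : ContDiff ℝ 1 H) (hu : IsFloerSolution H v η)
    (hG : GradBound H M h₁) (hvb : L2 (v s) ≤ vb) (hη : |η s| ≤ 𝔶) (ht : t ∈ Icc (0 : ℝ) 1) :
    1 + ‖v s t‖ ^ 2 ≤ supConst M h₁ 𝔶 vb + 2 * L2 (partialFst v s) ^ 2 := by
  have hsup := norm_sq_le_of_hasDerivAt (hasDerivAt_partialSnd hu.differentiable s)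
    ((contDiff_partialSnd (m := 1) hu.contDiff).continuous.uncurry_left s) ht
  have hvb_sq : L2 (v s) ^ 2 ≤ vb ^ 2 := pow_le_pow_left₀ (L2_nonneg _) hvb 2
  rw [supConst]
  linarith [hu.L2_partialSnd_sq_le hH hG hvb hη]

lemma integral_one_add_norm_sq_sq_le (hH : ContDiff ℝ 1 H) (hu : IsFloerSolution H v η)
    (hG : GradBound H M h₁) (hvb : L2 (v s) ≤ vb) (hη : |η s| ≤ 𝔶) :
    ∫ t in (0 : ℝ)..1, (1 + ‖v s t‖ ^ 2) ^ 2
      ≤ (1 + vb ^ 2) * (supConst M h₁ 𝔶 vb + 2 * energyDensity v η s) := by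
  have hvs : Continuous (v s) := hu.contDiff.continuous.uncurry_left s
  have hα := supConst_nonneg M h₁ 𝔶 vb
  have he := energyDensity_nonneg v η s
  calc ∫ t in (0 : ℝ)..1, (1 + ‖v s t‖ ^ 2) ^ 2
      ≤ ∫ t in (0 : ℝ)..1,
          (1 + ‖v s t‖ ^ 2) * (supConst M h₁ 𝔶 vb + 2 * energyDensity v η s) := by
        refine integral_mono_on zero_le_one (Continuous.intervalIntegrable (by fun_prop) _ _)
          (Continuous.intervalIntegrable (by fun_prop) _ _) fun t ht => ?_
        rw [sq]
        gcongr (1 + ‖v s t‖ ^ 2) * ?_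
        refine (hu.one_add_norm_sq_le hH hG hvb hη ht).trans ?_
        gcongr
        exact L2_partialFst_sq_le_energyDensity v η s
    _ ≤ (1 + vb ^ 2) * (supConst M h₁ 𝔶 vb + 2 * energyDensity v η s) := by
        rw [intervalIntegral.integral_mul_const]
        gcongr
        exact integral_one_add_norm_sq_le hvs hvb

lemma integral_lapLowerBound_sq_le {d : ℝ} (hH : ContDiff ℝ 2 H) (hu : IsFloerSolution H v η)
    (hM : HessBound H M) (hG : GradBound H M h₁) (hvb : L2 (v s) ≤ vb) (hη : |η s| ≤ 𝔶)
    (hη' : deriv η s ^ 2 ≤ d) :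
    ∫ t in (0 : ℝ)..1, lapLowerBound H v η (s, t) ^ 2
      ≤ lapCoeff M h₁ 𝔶 d ^ 2 * (1 + vb ^ 2)
        * (supConst M h₁ 𝔶 vb + 2 * energyDensity v η s) := by
  have hvs : Continuous (v s) := hu.contDiff.continuous.uncurry_left s
  have hf : Continuous fun t => lapLowerBound H v η (s, t) :=
    (hu.continuous_lapLowerBound hH).comp (by fun_prop)
  calc ∫ t in (0 : ℝ)..1, lapLowerBound H v η (s, t) ^ 2
      ≤ ∫ t in (0 : ℝ)..1, lapCoeff M h₁ 𝔶 d ^ 2 * (1 + ‖v s t‖ ^ 2) ^ 2 := by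
        refine integral_mono zero_le_one (Continuous.intervalIntegrable (by fun_prop) _ _)
          (Continuous.intervalIntegrable (by fun_prop) _ _) fun t => ?_
        rw [← mul_pow]
        exact sq_le_sq.2 ((abs_lapLowerBound_le hH hM hG hη hη').trans (le_abs_self _))
    _ ≤ lapCoeff M h₁ 𝔶 d ^ 2
        * ((1 + vb ^ 2) * (supConst M h₁ 𝔶 vb + 2 * energyDensity v η s)) := by
        rw [intervalIntegral.integral_const_mul]
        gcongr
        exact hu.integral_one_add_norm_sq_sq_le (hH.of_le one_le_two) hG hvb hη
    _ = _ := (mul_assoc _ _ _).symm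

end IsFloerSolution

end Energy

/-- The constant `C` in the bound for `‖f‖²_{L²(Ω)}`; since it bounds the square, the constant in
`‖f‖_{L²(Ω)} ≤ C` is its square root. -/
def l2BoundConst (M h₁ 𝔢 𝔶 vb ε : ℝ) : ℝ :=
  lapCoeff M h₁ 𝔶 (derivEtaSqBound M h₁ 𝔢 vb) ^ 2 * (1 + vb ^ 2)
    * (supConst M h₁ 𝔶 vb * (2 * 𝔢 / ε ^ 2) + 2 * 𝔢)

section L2Bound

variable {n : ℕ} {H : E n → ℝ} {v : ℝ → ℝ → E n} {η : ℝ → ℝ} {M h₁ 𝔢 𝔶 vb ε s₀ s₁ : ℝ}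

namespace IsFloerSolution

lemma volume_real_Icc_le (hu : IsFloerSolution H v η) (hε : 0 < ε)
    (he : Integrable (energyDensity v η)) (he_le : ∫ s, energyDensity v η s ≤ 𝔢)
    (hgrad : ∀ s ∈ Ioo s₀ s₁, ε ≤ gradNorm H (v s) (η s)) :
    volume.real (Icc s₀ s₁) ≤ 2 * 𝔢 / ε ^ 2 := by
  have hmarkov := (mul_volume_real_Icc_le_integral he (energyDensity_nonneg v η) fun s hs =>
    hu.sq_div_two_le_energyDensity hε.le (hgrad s hs)).trans he_le
  rw [le_div_iff₀ (by positivity)]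
  linarith

lemma integral_integral_lapLowerBound_sq_le (hH : ContDiff ℝ 2 H) (hu : IsFloerSolution H v η)
    (hM : HessBound H M) (hG : GradBound H M h₁) (hε : 0 < ε)
    (he : Integrable (energyDensity v η)) (he_le : ∫ s, energyDensity v η s ≤ 𝔢)
    (hvb : ∀ s, L2 (v s) ≤ vb) (hη : ∀ s, |η s| ≤ 𝔶)
    (hgrad : ∀ s ∈ Ioo s₀ s₁, ε ≤ gradNorm H (v s) (η s)) :
    ∫ s in Icc s₀ s₁, ∫ t in (0 : ℝ)..1, lapLowerBound H v η (s, t) ^ 2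
      ≤ l2BoundConst M h₁ 𝔢 𝔶 vb ε := by
  set α := supConst M h₁ 𝔶 vb
  set c := lapCoeff M h₁ 𝔶 (derivEtaSqBound M h₁ 𝔢 vb)
  have hα : 0 ≤ α := supConst_nonneg M h₁ 𝔶 vb
  have hH₁ : ContDiff ℝ 1 H := hH.of_le one_le_two
  have hslice (s : ℝ) : ∫ t in (0 : ℝ)..1, lapLowerBound H v η (s, t) ^ 2
      ≤ c ^ 2 * (1 + vb ^ 2) * (α + 2 * energyDensity v η s) :=
    hu.integral_lapLowerBound_sq_le hH hM hG (hvb s) (hη s)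
      (hu.deriv_eta_sq_le hH₁ hG hvb he he_le s)
  have hf : Continuous fun s => ∫ t in (0 : ℝ)..1, lapLowerBound H v η (s, t) ^ 2 :=
    continuous_parametric_intervalIntegral_of_continuous'
      (f := fun s t => lapLowerBound H v η (s, t) ^ 2)
      ((hu.continuous_lapLowerBound hH).fun_pow 2) 0 1
  have hαi : IntegrableOn (fun _ => α) (Icc s₀ s₁) := integrableOn_const measure_Icc_lt_top.ne
  have hei : IntegrableOn (fun s => 2 * energyDensity v η s) (Icc s₀ s₁) :=
    (he.const_mul 2).integrableOn
  calc ∫ s in Icc s₀ s₁, ∫ t in (0 : ℝ)..1, lapLowerBound H v η (s, t) ^ 2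
      ≤ ∫ s in Icc s₀ s₁, c ^ 2 * (1 + vb ^ 2) * (α + 2 * energyDensity v η s) :=
        setIntegral_mono hf.integrableOn_Icc ((hαi.add hei).const_mul _) hslice
    _ = c ^ 2 * (1 + vb ^ 2) * (α * volume.real (Icc s₀ s₁)
        + 2 * ∫ s in Icc s₀ s₁, energyDensity v η s) := by
        rw [MeasureTheory.integral_const_mul, MeasureTheory.integral_add hαi hei,
          setIntegral_const, MeasureTheory.integral_const_mul, smul_eq_mul, mul_comm α]
    _ ≤ c ^ 2 * (1 + vb ^ 2) * (α * (2 * 𝔢 / ε ^ 2) + 2 * 𝔢) := by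
        gcongr
        · exact hu.volume_real_Icc_le hε he he_le hgrad
        · exact (setIntegral_le_integral he (.of_forall (energyDensity_nonneg v η))).trans he_le

end IsFloerSolution

end L2Bound

theorem elliptic_inequality_and_L2_bound_general {n : ℕ} {H : E n → ℝ} {v : ℝ → ℝ → E n}
    {η : ℝ → ℝ} (hH : ContDiff ℝ 2 H) (hu : IsFloerSolution H v η) :
    (∀ s t, lapLowerBound H v η (s, t) ≤ lapF v s t) ∧
    ∀ {M h₁ 𝔢 𝔶 vb ε s₀ s₁ : ℝ} {Ω : Set (ℝ × ℝ)}, 0 ≤ 𝔢 → 0 < ε →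
      HessBound H M → GradBound H M h₁ →
      ∫⁻ s, ENNReal.ofReal (energyDensity v η s) ≤ ENNReal.ofReal 𝔢 →
      (∀ s, L2 (v s) ≤ vb) → (∀ s, |η s| ≤ 𝔶) →
      Ω ⊆ Icc s₀ s₁ ×ˢ Icc 0 1 → (∀ s ∈ Ioo s₀ s₁, ε ≤ gradNorm H (v s) (η s)) →
      IntegrableOn (fun p => lapLowerBound H v η p ^ 2) Ω ∧
      ∫ p in Ω, lapLowerBound H v η p ^ 2 ≤ l2BoundConst M h₁ 𝔢 𝔶 vb ε := by
  refine ⟨hu.lapLowerBound_le_lapF hH, fun h𝔢 hε hM hG henergy hvb hη hΩ hgrad => ?_⟩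
  obtain ⟨he, he_le⟩ := integrable_and_integral_le_of_lintegral_ofReal_le
    (hu.continuous_energyDensity (hH.of_le one_le_two)).aestronglyMeasurable
    (energyDensity_nonneg v η) h𝔢 henergy
  obtain ⟨hint, hle⟩ := setIntegral_le_integral_intervalIntegral
    ((hu.continuous_lapLowerBound hH).pow 2) (fun _ => sq_nonneg _) hΩ
  exact ⟨hint, hle.trans
    (hu.integral_integral_lapLowerBound_sq_le hH hM hG hε he he_le hvb hη hgrad)⟩

/-- **Proposition 7.2 (elliptic differential inequality and `L²`-bound for the
maximum principle).** -/
theorem elliptic_inequality_and_L2_bound (n : ℕ) (M h₁ L 𝔢 𝔶 vb ε : ℝ)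
    (hM : 0 < M) (hh₁ : 0 ≤ h₁) (hL : 0 ≤ L)
    (h𝔢 : 0 ≤ 𝔢) (h𝔶 : 0 ≤ 𝔶) (hvb : 0 ≤ vb) (hε : 0 < ε) :
    -- (a) the elliptic differential inequality
    (∀ H : E n → ℝ, ContDiff ℝ (⊤ : ℕ∞) H →
      ∀ (v : ℝ → ℝ → E n) (η : ℝ → ℝ), FloerAut H v η →
        ∀ s t : ℝ,
          (η s) ^ 2 * f1fun H (v s t) + deriv η s * f2fun H (v s t) ≤ lapF v s t) ∧
    -- (b) the L² bound, with a constant depending only on M, h₁, L, 𝔢, 𝔶, vb, ε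
    ∃ C : ℝ, ∀ (H : E n → ℝ) (v : ℝ → ℝ → E n) (η : ℝ → ℝ)
        (Ω : Set (ℝ × ℝ)) (s₀ s₁ : ℝ),
      ContDiff ℝ (⊤ : ℕ∞) H → HessBound H M → GradBound H M h₁ → SatH2 H L →
      FloerAut H v η →
      (∫⁻ s : ℝ, ENNReal.ofReal
          ((L2 (fun t => deriv (fun σ => v σ t) s)) ^ 2 + (deriv η s) ^ 2)
        ≤ ENNReal.ofReal 𝔢) →
      (∀ s, L2 (v s) ≤ vb) → (∀ s, |η s| ≤ 𝔶) →
      MeasurableSet Ω → IsConnected Ω → Ω ⊆ Set.univ ×ˢ Ico (0:ℝ) 1 →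
      (∀ p ∈ Ω, s₀ ≤ p.1 ∧ p.1 ≤ s₁) →
      (∀ s ∈ Ioo s₀ s₁, ε < gradNorm H (v s) (η s)) →
      IntegrableOn
        (fun p : ℝ × ℝ =>
          ((η p.1) ^ 2 * f1fun H (v p.1 p.2) + deriv η p.1 * f2fun H (v p.1 p.2)) ^ 2)
        Ω volume ∧
      (∫ p in Ω,
          ((η p.1) ^ 2 * f1fun H (v p.1 p.2) + deriv η p.1 * f2fun H (v p.1 p.2)) ^ 2
          ∂volume) ≤ C := by
  refine ⟨fun H hH v η hu => (elliptic_inequality_and_L2_bound_general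
    (contDiff_infty.1 hH 2) hu.isFloerSolution).1, l2BoundConst M h₁ 𝔢 𝔶 vb ε, ?_⟩
  intro H v η Ω s₀ s₁ hH hHess hG _ hu henergy hv hη _ _ hΩ hΩs hgrad
  exact (elliptic_inequality_and_L2_bound_general (contDiff_infty.1 hH 2) hu.isFloerSolution).2
    h𝔢 hε hHess hG henergy hv hη (fun p hp => ⟨hΩs p hp, Ico_subset_Icc_self (hΩ hp).2⟩)
    fun s hs => (hgrad s hs).le
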